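/- If G is a non-cyclic finite group of order n, then 11·ψ(G) ≤ 7·ψ(C_n). -/

import Mathlib

/-- `psi G` is the sum of the orders of all elements of the finite group `G`. -/
noncomputable def psi (G : Type*) [Group G] [Fintype G] : ℕ := ∑ x : G, orderOf x

/-- `psiC n` is the sum of the orders of all elements of the cyclic group `C_n`. -/
noncomputable def psiC (n : ℕ) : ℕ := ∑ k ∈ Finset.range n, addOrderOf (k : ZMod n)

/-!
Induct on `|G|`. Let `p` be the largest prime divisor of `n = |G|`, let `x` have maximal order and
let `k` be the index of `⟨x⟩`. From `ψ(G) ≤ n * o(x)` and `2 * n ^ 2 ≤ ψ(C_n) * (p + 1)`, a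
counterexample satisfies `14 * k < 11 * (p + 1)`, so that `k < p` or `p = k = 2` or `p = k = 3`. In
the last two cases the elements outside `⟨x⟩` are bounded by `o(x)`, which is good enough.

If `k < p`, a Sylow `p`-subgroup `P` lies in `⟨x⟩`, hence is cyclic, and it is normal because the
number of Sylow `p`-subgroups divides `k`. By Schur–Zassenhaus it has a complement `H`. An element
`g ∈ H` either centralizes `P` or is conjugate under `P` to every element of `g * P`, because a
nontrivial automorphism `f` of a cyclic `p`-group whose order is prime to `p` makes `q ↦ f q / q`
bijective. With `Z = C_H(P)` this gives `ψ(G) = ψ(Z) * ψ(P) + (ψ(H) - ψ(Z)) * |P|`. Thus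
`ψ(G) ≤ ψ(H) * ψ(P)`, which settles the case of noncyclic `H` by induction. If `H` is cyclic then
`Z ≠ H`, and `3 * ψ(Z) ≤ ψ(H)` and `7 * |P| ≤ 3 * ψ(P)` suffice.
-/

theorem psi_eq_sum_divisors (G : Type*) [Group G] [Fintype G] [IsCyclic G] :
    psi G = ∑ d ∈ (Nat.card G).divisors, d * d.totient := by
  have hmem : ∀ x ∈ (Finset.univ : Finset G), orderOf x ∈ (Nat.card G).divisors := fun x _ =>
    Nat.mem_divisors.2 ⟨orderOf_dvd_natCard x, Nat.card_pos.ne'⟩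
  rw [psi, ← Finset.sum_fiberwise_of_maps_to hmem]
  refine Finset.sum_congr rfl fun d hd => ?_
  have hd : d ∣ Fintype.card G := Nat.card_eq_fintype_card (α := G) ▸ Nat.dvd_of_mem_divisors hd
  rw [Finset.sum_congr rfl fun x hx => (Finset.mem_filter.1 hx).2, Finset.sum_const,
    IsCyclic.card_orderOf_eq_totient hd, smul_eq_mul, mul_comm]

theorem psiC_eq_psi_zmod (n : ℕ) [NeZero n] : psiC n = psi (Multiplicative (ZMod n)) := by
  obtain ⟨m, rfl⟩ := Nat.exists_eq_succ_of_ne_zero (NeZero.ne n)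
  have hfin : psiC (m + 1) = ∑ k : Fin (m + 1), addOrderOf (k : ZMod (m + 1)) := by
    rw [psiC, Finset.sum_range]
    exact Finset.sum_congr rfl fun k _ => congrArg addOrderOf (Fin.cast_val_eq_self k)
  rw [hfin]
  exact Fintype.sum_equiv Multiplicative.ofAdd _ _ fun k => (orderOf_ofAdd_eq_addOrderOf k).symm

theorem psiC_eq_sum_divisors (n : ℕ) : psiC n = ∑ d ∈ n.divisors, d * d.totient := by
  rcases eq_or_ne n 0 with rfl | hn
  · simp [psiC]
  · have : NeZero n := ⟨hn⟩
    rw [psiC_eq_psi_zmod, psi_eq_sum_divisors, Nat.card_congr Multiplicative.toAdd, Nat.card_zmod]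

theorem psi_eq_psiC (G : Type*) [Group G] [Fintype G] [IsCyclic G] :
    psi G = psiC (Nat.card G) := by
  rw [psi_eq_sum_divisors, psiC_eq_sum_divisors]

theorem le_psiC (n : ℕ) : n ≤ psiC n := by
  rw [psiC_eq_sum_divisors]
  nth_rw 1 [← Nat.sum_totient n]
  exact Finset.sum_le_sum fun d hd => Nat.le_mul_of_pos_left _ (Nat.pos_of_mem_divisors hd)

theorem psiC_prime {p : ℕ} (hp : p.Prime) : psiC p = p * (p - 1) + 1 := by
  rw [psiC_eq_sum_divisors, hp.sum_divisors, Nat.totient_prime hp, Nat.totient_one, one_mul]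

theorem psiC_mul {m n : ℕ} (h : m.Coprime n) : psiC (m * n) = psiC m * psiC n := by
  simp only [psiC_eq_sum_divisors]
  rw [Nat.divisors_mul, Finset.mul_def, Finset.sum_image h.mul_injOn_divisors, Finset.sum_mul_sum,
    Finset.sum_product]
  refine Finset.sum_congr rfl fun d hd => Finset.sum_congr rfl fun e he => ?_
  rw [Nat.totient_mul (h.of_dvd (Nat.dvd_of_mem_divisors hd) (Nat.dvd_of_mem_divisors he))]
  ring

theorem psiC_prime_pow_mul {p : ℕ} (hp : p.Prime) (a : ℕ) :
    psiC (p ^ a) * (p + 1) = p ^ (2 * a + 1) + 1 := by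
  rw [psiC_eq_sum_divisors, Nat.sum_divisors_prime_pow hp]
  induction a with
  | zero => simp
  | succ a ih =>
    rw [Finset.sum_range_succ, add_mul, ih, Nat.totient_prime_pow_succ hp]
    obtain ⟨q, rfl⟩ := Nat.exists_eq_add_of_le' hp.one_le
    rw [Nat.add_sub_cancel]
    ring

theorem psiC_prime_pow_mul_psiC_prime_pow_le {p : ℕ} (hp : p.Prime) (a b : ℕ) :
    psiC (p ^ a) * psiC (p ^ b) ≤ psiC (p ^ (a + b)) := by
  have hpa : 1 ≤ p ^ (2 * a) := Nat.one_le_pow _ _ hp.pos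
  have hpb : 1 ≤ p ^ (2 * b) := Nat.one_le_pow _ _ hp.pos
  refine Nat.le_of_mul_le_mul_right (c := (p + 1) * (p + 1)) ?_ (by positivity)
  calc psiC (p ^ a) * psiC (p ^ b) * ((p + 1) * (p + 1))
      = (psiC (p ^ a) * (p + 1)) * (psiC (p ^ b) * (p + 1)) := by ring
    _ = (p * p ^ (2 * a) + 1) * (p * p ^ (2 * b) + 1) := by
      rw [psiC_prime_pow_mul hp, psiC_prime_pow_mul hp, pow_succ', pow_succ']
    _ ≤ (p * (p ^ (2 * a) * p ^ (2 * b)) + 1) * (p + 1) := by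
      obtain ⟨u, hu⟩ := Nat.exists_eq_add_of_le hpa
      obtain ⟨v, hv⟩ := Nat.exists_eq_add_of_le hpb
      rw [hu, hv]
      nlinarith [Nat.zero_le (p * (u * v))]
    _ = psiC (p ^ (a + b)) * ((p + 1) * (p + 1)) := by
      rw [← pow_add, ← pow_succ', ← mul_add, ← psiC_prime_pow_mul hp, mul_assoc]

theorem psiC_mul_psiC_le (m n : ℕ) : psiC m * psiC n ≤ psiC (m * n) := by
  induction m using Nat.recOnPrimeCoprime generalizing n with
  | zero => simp [psiC]
  | prime_pow p a hp =>
    rcases eq_or_ne n 0 with rfl | hn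
    · simp [psiC]
    obtain ⟨b, k, hk, rfl⟩ := Nat.exists_eq_pow_mul_and_not_dvd hn p hp.ne_one
    have hcop (c : ℕ) : (p ^ c).Coprime k := ((hp.coprime_iff_not_dvd).2 hk).pow_left c
    rw [psiC_mul (hcop b), ← mul_assoc, ← mul_assoc, ← pow_add, psiC_mul (hcop _)]
    exact Nat.mul_le_mul_right _ (psiC_prime_pow_mul_psiC_prime_pow_le hp a b)
  | coprime a b _ _ hab iha ihb =>
    calc psiC (a * b) * psiC n = psiC a * (psiC b * psiC n) := by rw [psiC_mul hab, mul_assoc]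
      _ ≤ psiC a * psiC (b * n) := Nat.mul_le_mul_left _ (ihb n)
      _ ≤ psiC (a * b * n) := (iha (b * n)).trans_eq (by rw [mul_assoc])

theorem three_mul_psiC_le_of_dvd {m n : ℕ} (hn : n ≠ 0) (hmn : m ∣ n) (hne : m ≠ n) :
    3 * psiC m ≤ psiC n := by
  obtain ⟨k, rfl⟩ := hmn
  have hk : 3 ≤ psiC k := by
    rcases eq_or_ne k 2 with rfl | hk2
    · exact (psiC_prime Nat.prime_two).ge
    · have hk0 : k ≠ 0 := right_ne_zero_of_mul hn
      have hk1 : k ≠ 1 := by rintro rfl; exact hne (mul_one m).symm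
      exact le_trans (by lia) (le_psiC k)
  calc 3 * psiC m ≤ psiC m * psiC k := by rw [mul_comm]; exact Nat.mul_le_mul_left _ hk
    _ ≤ psiC (m * k) := psiC_mul_psiC_le m k

theorem seven_mul_le_three_mul_psiC {p n : ℕ} (hp : p.Prime) (hp3 : 3 ≤ p) (hpn : p ∣ n) :
    7 * n ≤ 3 * psiC n := by
  obtain ⟨m, rfl⟩ := hpn
  have hprime : 7 * p ≤ 3 * psiC p := by
    rw [psiC_prime hp]
    obtain ⟨q, rfl⟩ := Nat.exists_eq_add_of_le' hp3
    rw [show q + 3 - 1 = q + 2 by lia]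
    nlinarith
  calc 7 * (p * m) = 7 * p * m := by ring
    _ ≤ 3 * psiC p * psiC m := Nat.mul_le_mul hprime (le_psiC m)
    _ = 3 * (psiC p * psiC m) := by ring
    _ ≤ 3 * psiC (p * m) := Nat.mul_le_mul_left _ (psiC_mul_psiC_le p m)

-- `psiC n / n ^ 2` is at least the product of `p / (p + 1)` over the primes `p ∣ n`, which only
-- gets smaller, and telescopes to `2 / N`, when `p` runs over all integers from `2` to `N - 1`.
theorem two_mul_sq_le_psiC_mul {N n : ℕ} (hN : 2 ≤ N) (hn : n ∈ N.smoothNumbers) :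
    2 * n ^ 2 ≤ psiC n * N := by
  induction N, hN using Nat.le_induction generalizing n with
  | base =>
    obtain rfl : n = 1 := by simpa [Nat.smoothNumbers_succ Nat.not_prime_one] using hn
    exact Nat.mul_le_mul_right 2 (le_psiC 1)
  | succ N _ ih =>
    by_cases hp : N.Prime
    · obtain ⟨⟨e, m, hm⟩, he⟩ := (Nat.equivProdNatSmoothNumbers hp).surjective ⟨n, hn⟩
      obtain rfl : N ^ e * m = n := congrArg Subtype.val he
      calc 2 * (N ^ e * m) ^ 2 = (N ^ e) ^ 2 * (2 * m ^ 2) := by ring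
        _ ≤ (N ^ e) ^ 2 * (psiC m * N) := Nat.mul_le_mul_left _ (ih hm)
        _ = N ^ (2 * e + 1) * psiC m := by ring
        _ ≤ psiC (N ^ e) * (N + 1) * psiC m := by
          rw [psiC_prime_pow_mul hp]
          exact Nat.mul_le_mul_right _ (Nat.le_succ _)
        _ = psiC (N ^ e * m) * (N + 1) := by
          rw [psiC_mul ((hp.smoothNumbers_coprime hm).pow_left e)]
          ring
    · rw [Nat.smoothNumbers_succ hp] at hn
      exact (ih hn).trans (Nat.mul_le_mul_left _ (Nat.le_succ N))

theorem exists_prime_dvd_and_mem_smoothNumbers {n : ℕ} (hn : 1 < n) :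
    ∃ p, p.Prime ∧ p ∣ n ∧ n ∈ (p + 1).smoothNumbers := by
  obtain ⟨p, hp, hmax⟩ :=
    Finset.exists_max_image n.primeFactors id (Nat.nonempty_primeFactors.2 hn)
  refine ⟨p, Nat.prime_of_mem_primeFactors hp, Nat.dvd_of_mem_primeFactors hp,
    Nat.mem_smoothNumbers'.2 fun q hq hqn => Nat.lt_succ_of_le (hmax q ?_)⟩
  exact Nat.mem_primeFactors.2 ⟨hq, hqn, by lia⟩

theorem psi_subgroup {G : Type*} [Group G] [Fintype G] (H : Subgroup G) [Fintype H]
    [DecidablePred (· ∈ H)] : psi H = ∑ x : G with x ∈ H, orderOf x := by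
  rw [psi, Finset.sum_subtype _ (p := (· ∈ H)) (by simp)]
  exact Finset.sum_congr rfl fun x _ => (Subgroup.orderOf_coe x).symm

theorem psi_subgroup_le {G : Type*} [Group G] [Fintype G] (H : Subgroup G) [Fintype H] :
    psi H ≤ psi G := by
  classical
  rw [psi_subgroup]
  exact Finset.sum_le_sum_of_subset (Finset.filter_subset _ _)

theorem three_mul_psi_subgroup_le {G : Type*} [Group G] [Fintype G] [IsCyclic G] {H : Subgroup G}
    [Fintype H] (hH : H ≠ ⊤) : 3 * psi H ≤ psi G := by
  rw [psi_eq_psiC, psi_eq_psiC]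
  exact three_mul_psiC_le_of_dvd Nat.card_pos.ne' H.card_subgroup_dvd_card
    (mt H.eq_top_of_card_eq hH)

theorem orderOf_mul_index_zpowers {G : Type*} [Group G] (x : G) :
    orderOf x * (Subgroup.zpowers x).index = Nat.card G := by
  rw [← Nat.card_zpowers, Subgroup.card_mul_index]

section MaximalOrder

variable {G : Type*} [Group G] [Fintype G] {x : G}

theorem psi_le_card_mul_orderOf (hx : ∀ y : G, orderOf y ≤ orderOf x) :
    psi G ≤ Nat.card G * orderOf x := by
  simpa [psi] using Finset.sum_le_card_nsmul Finset.univ _ _ fun y _ => hx y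

theorem psi_le_psiC_add (hx : ∀ y : G, orderOf y ≤ orderOf x) :
    psi G ≤ psiC (orderOf x) + (Nat.card G - orderOf x) * orderOf x := by
  classical
  let H := Subgroup.zpowers x
  have hH : ∑ y : G with y ∈ H, orderOf y = psiC (orderOf x) := by
    rw [← psi_subgroup, psi_eq_psiC, Nat.card_zpowers]
  have hcard : (Finset.univ.filter (· ∈ H)).card = orderOf x := by
    rw [← Nat.card_zpowers, Nat.card_eq_fintype_card, Fintype.card_subtype]
  have hcompl : (Finset.univ.filter (· ∉ H)).card = Nat.card G - orderOf x := by
    rw [← hcard, Nat.card_eq_fintype_card, ← Finset.card_univ,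
      ← Finset.card_filter_add_card_filter_not (s := Finset.univ) (· ∈ H), Nat.add_sub_cancel_left]
  rw [psi, ← Finset.sum_filter_add_sum_filter_not _ (· ∈ H), hH, ← hcompl, ← smul_eq_mul]
  exact Nat.add_le_add_left (Finset.sum_le_card_nsmul _ _ _ fun y _ => hx y) _

theorem fourteen_mul_index_zpowers_lt {N : ℕ} (hN : 2 ≤ N) (hG : Nat.card G ∈ N.smoothNumbers)
    (hx : ∀ y : G, orderOf y ≤ orderOf x) (hlt : 7 * psiC (Nat.card G) < 11 * psi G) :
    14 * (Subgroup.zpowers x).index < 11 * N := by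
  refine Nat.lt_of_mul_lt_mul_left (a := Nat.card G * orderOf x) ?_
  calc Nat.card G * orderOf x * (14 * (Subgroup.zpowers x).index)
      = 7 * (2 * Nat.card G ^ 2) := by rw [← orderOf_mul_index_zpowers x]; ring
    _ ≤ 7 * (psiC (Nat.card G) * N) := Nat.mul_le_mul_left _ (two_mul_sq_le_psiC_mul hN hG)
    _ = 7 * psiC (Nat.card G) * N := by ring
    _ < 11 * psi G * N := Nat.mul_lt_mul_of_pos_right hlt (by lia)
    _ ≤ 11 * (Nat.card G * orderOf x) * N := by grw [psi_le_card_mul_orderOf hx]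
    _ = Nat.card G * orderOf x * (11 * N) := by ring

theorem eleven_mul_psi_le_of_index_eq_two (hG : ¬ IsCyclic G)
    (h2 : Nat.card G ∈ Nat.smoothNumbers 3) (hx : ∀ y : G, orderOf y ≤ orderOf x)
    (hindex : (Subgroup.zpowers x).index = 2) :
    11 * psi G ≤ 7 * psiC (Nat.card G) := by
  have hcard : orderOf x * 2 = Nat.card G := by
    rw [← hindex, orderOf_mul_index_zpowers]
  obtain ⟨b, hb⟩ : ∃ b, orderOf x = 2 ^ b :=
    ⟨_, Nat.eq_prime_pow_of_unique_prime_dvd (orderOf_pos x).ne' fun {q} hq hqx =>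
      le_antisymm (Nat.lt_succ_iff.1 (Nat.mem_smoothNumbers'.1 h2 q hq
        (hqx.trans (orderOf_dvd_natCard x)))) hq.two_le⟩
  have hord : 2 ≤ orderOf x := by
    by_contra! hlt
    have := Fact.mk Nat.prime_two
    have := orderOf_pos x
    exact hG (isCyclic_of_prime_card (p := 2) (by lia))
  have hpsi : psi G ≤ psiC (orderOf x) + orderOf x * orderOf x := by
    have := psi_le_psiC_add hx
    rwa [← hcard, show orderOf x * 2 - orderOf x = orderOf x by lia] at this
  have hpsiC : 3 * psiC (orderOf x) = 2 * orderOf x ^ 2 + 1 := by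
    have := psiC_prime_pow_mul Nat.prime_two b
    rw [hb, mul_comm, this]
    ring
  have hpsiC' : 3 * psiC (Nat.card G) = 8 * orderOf x ^ 2 + 1 := by
    have := psiC_prime_pow_mul Nat.prime_two (b + 1)
    rw [← hcard, hb, ← pow_succ, mul_comm, this]
    ring
  nlinarith

theorem eleven_mul_psi_le_of_index_eq_three (h3 : Nat.card G ∈ Nat.smoothNumbers 4)
    (hx : ∀ y : G, orderOf y ≤ orderOf x) (hindex : (Subgroup.zpowers x).index = 3) :
    11 * psi G ≤ 7 * psiC (Nat.card G) := by
  have hcard : orderOf x * 3 = Nat.card G := by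
    rw [← hindex, orderOf_mul_index_zpowers]
  have hpsi : psi G ≤ psiC (orderOf x) + 2 * orderOf x ^ 2 := by
    have := psi_le_psiC_add hx
    rwa [← hcard, show orderOf x * 3 - orderOf x = 2 * orderOf x by lia, mul_assoc, ← sq] at this
  have hpsiC : 7 * psiC (orderOf x) ≤ psiC (Nat.card G) := by
    have := psiC_mul_psiC_le (orderOf x) 3
    rwa [psiC_prime Nat.prime_three, mul_comm, hcard] at this
  have hsmooth := two_mul_sq_le_psiC_mul (by lia) h3
  rw [← hcard, mul_pow, hcard] at hsmooth
  lia

end MaximalOrder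

theorem le_of_isPGroup_of_index_lt {G : Type*} [Group G] {p : ℕ} [Fact p.Prime]
    {P H : Subgroup G} [H.FiniteIndex] (hP : IsPGroup p P) (hH : H.index < p) : P ≤ H := by
  have hle : H.relIndex P ≤ H.index := by
    rw [← H.relIndex_top_right]
    exact Subgroup.relIndex_le_of_le_right le_top
      (by simpa using Subgroup.FiniteIndex.index_ne_zero)
  obtain ⟨n, hn⟩ : ∃ n, H.relIndex P = p ^ n := hP.index (H.subgroupOf P)
  rcases n with _ | n
  · exact Subgroup.relIndex_eq_one.1 hn
  · have : p ≤ p ^ (n + 1) := Nat.le_self_pow n.succ_ne_zero p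
    lia

theorem sylow_normal_of_index_lt {G : Type*} [Group G] [Finite G] {p : ℕ} [Fact p.Prime]
    {H : Subgroup G} [IsMulCommutative H] (hH : H.index < p) (P : Sylow p G) :
    (P : Subgroup G).Normal := by
  have hPH : (P : Subgroup G) ≤ H := le_of_isPGroup_of_index_lt P.isPGroup' hH
  have hHN : H ≤ Subgroup.normalizer (P : Subgroup G) :=
    (H.le_centralizer.trans (Subgroup.centralizer_le hPH)).trans
      (Subgroup.centralizer_le_normalizer _)
  have hcard : Nat.card (Sylow p G) < p := by
    rw [P.card_eq_index_normalizer]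
    exact (Nat.le_of_dvd (Nat.pos_of_ne_zero Subgroup.FiniteIndex.index_ne_zero)
      (Subgroup.index_dvd_of_le hHN)).trans_lt hH
  have hone : Nat.card (Sylow p G) = 1 :=
    (card_sylow_modEq_one p G).eq_of_lt_of_lt hcard (Fact.out : p.Prime).one_lt
  rw [P.card_eq_index_normalizer, Subgroup.index_eq_one] at hone
  exact Subgroup.normalizer_eq_top_iff.1 hone

theorem exists_map_div_eq {C : Type*} [CommGroup C] [Finite C] [IsCyclic C] {p : ℕ} [Fact p.Prime]
    (hC : IsPGroup p C) {f : MulAut C} (hf : (orderOf f).Coprime (Nat.card C)) (hf1 : f ≠ 1)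
    (c : C) : ∃ q, f q / q = c := by
  let R : Subgroup C := (f.toMonoidHom / MonoidHom.id C).range
  have hpow (n : ℕ) (q : C) : (f ^ n) q / q ∈ R := by
    induction n with
    | zero => simp
    | succ n ih =>
      rw [← div_mul_div_cancel _ ((f ^ n) q), pow_succ', MulAut.mul_apply]
      exact R.mul_mem ⟨(f ^ n) q, rfl⟩ ih
  have hcop : (Nat.card C).Coprime (Nat.card (Subgroup.zpowers f)) := by
    rw [Nat.card_zpowers]
    exact hf.symm
  rcases hC.smul_mul_inv_trivial_or_surjective hcop with h | h
  · exact absurd (MulEquiv.ext fun q => mul_inv_eq_one.1 (h q ⟨f, Subgroup.mem_zpowers f⟩)) hf1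
  · obtain ⟨⟨k, hk⟩, q, rfl⟩ := h c
    obtain ⟨n, rfl⟩ := mem_powers_iff_mem_zpowers.2 hk
    rw [← div_eq_mul_inv]
    exact hpow n q

section Complement

variable {G : Type*} [Group G] {p : ℕ} [Fact p.Prime] {H P : Subgroup G}

theorem orderOf_mul_eq_of_notMem_centralizer [P.Normal] [Finite P] [IsCyclic P]
    (hP : IsPGroup p P) {g h : G} (hg : (orderOf g).Coprime (Nat.card P))
    (hgP : g ∉ Subgroup.centralizer (P : Set G)) (hh : h ∈ P) : orderOf (g * h) = orderOf g := by
  let _ : CommGroup P := IsCyclic.commGroup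
  let f : MulAut P := MulAut.conjNormal g⁻¹
  have hf : (orderOf f).Coprime (Nat.card P) :=
    hg.coprime_dvd_left ((orderOf_map_dvd _ _).trans (orderOf_inv g).dvd)
  have hf1 : f ≠ 1 := fun h1 => hgP fun q hq => by
    have : g⁻¹ * q * g⁻¹⁻¹ = q := congrArg Subtype.val (DFunLike.congr_fun h1 (⟨q, hq⟩ : P))
    rwa [inv_inv, mul_assoc, inv_mul_eq_iff_eq_mul] at this
  obtain ⟨q, hq⟩ := exists_map_div_eq hP hf hf1 ⟨h, hh⟩
  have hq : g⁻¹ * q * g⁻¹⁻¹ * (q : G)⁻¹ = h := by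
    simpa [f, div_eq_mul_inv] using congrArg Subtype.val hq
  have hsemi : SemiconjBy (q : G) g (g * h) := by
    rw [← hq, SemiconjBy]
    group
  exact hsemi.orderOf_eq.symm

theorem sum_eq_sum_sum_of_isComplement' [Fintype G] [Fintype H] [Fintype P]
    (hHP : H.IsComplement' P) {M : Type*} [AddCommMonoid M] (f : G → M) :
    ∑ x, f x = ∑ g : H, ∑ h : P, f (g * h) := by
  rw [← Fintype.sum_prod_type']
  exact (Fintype.sum_equiv (Equiv.ofBijective _ hHP) _ _ fun _ => rfl).symm

theorem psi_add_psi_centralizer_mul_card [P.Normal] [IsCyclic P] [Fintype G] [Fintype H] [Fintype P]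
    [Fintype ((Subgroup.centralizer (P : Set G)).subgroupOf H)]
    (hP : IsPGroup p P) (hHP : H.IsComplement' P) (hcop : (Nat.card H).Coprime (Nat.card P)) :
    psi G + psi ((Subgroup.centralizer (P : Set G)).subgroupOf H) * Nat.card P =
      psi ((Subgroup.centralizer (P : Set G)).subgroupOf H) * psi P + psi H * Nat.card P := by
  classical
  rw [psi_subgroup, psi, sum_eq_sum_sum_of_isComplement' hHP, Finset.sum_filter, psi, psi,
    Finset.sum_mul, Finset.sum_mul, Finset.sum_mul, ← Finset.sum_add_distrib,
    ← Finset.sum_add_distrib]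
  refine Finset.sum_congr rfl fun g _ => ?_
  have hg : (orderOf (g : G)).Coprime (Nat.card P) := by
    rw [Subgroup.orderOf_coe]
    exact hcop.coprime_dvd_left (orderOf_dvd_natCard g)
  split_ifs with hgP
  · rw [← Subgroup.orderOf_coe g, Finset.mul_sum]
    congr 1
    refine Finset.sum_congr rfl fun h _ => ?_
    have hcomm : Commute (g : G) h := (hgP h h.2).symm
    rw [← Subgroup.orderOf_coe h]
    exact hcomm.orderOf_mul_eq_mul_orderOf_of_coprime (hg.coprime_dvd_right
      (Subgroup.orderOf_coe h ▸ orderOf_dvd_natCard h))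
  · rw [zero_mul, zero_mul, add_zero, zero_add, ← Subgroup.orderOf_coe g, Finset.sum_congr rfl
      fun h _ => orderOf_mul_eq_of_notMem_centralizer hP hg hgP h.2, Finset.sum_const,
      Finset.card_univ, Nat.card_eq_fintype_card, smul_eq_mul, mul_comm]

theorem isCyclic_of_isComplement' [Finite G] [IsCyclic H] [IsCyclic P] (hHP : H.IsComplement' P)
    (hcop : (Nat.card H).Coprime (Nat.card P)) (hcomm : H ≤ Subgroup.centralizer (P : Set G)) :
    IsCyclic G := by
  obtain ⟨g, hg⟩ := IsCyclic.exists_ofOrder_eq_natCard (α := H)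
  obtain ⟨h, hh⟩ := IsCyclic.exists_ofOrder_eq_natCard (α := P)
  rw [← Subgroup.orderOf_coe] at hg hh
  have hgh : Commute (g : G) h := (hcomm g.2 h h.2).symm
  refine isCyclic_of_orderOf_eq_card (g * h : G) ?_
  rw [hgh.orderOf_mul_eq_mul_orderOf_of_coprime (by rwa [hg, hh]), hg, hh, hHP.card_mul_card]

theorem psi_le_psi_mul_psi_of_isComplement' [P.Normal] [IsCyclic P] [Fintype G] [Fintype H]
    [Fintype P] (hP : IsPGroup p P) (hHP : H.IsComplement' P)
    (hcop : (Nat.card H).Coprime (Nat.card P)) : psi G ≤ psi H * psi P := by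
  classical
  have hpsi := psi_add_psi_centralizer_mul_card hP hHP hcop
  have hZ := psi_subgroup_le ((Subgroup.centralizer (P : Set G)).subgroupOf H)
  have hcard : Nat.card P ≤ psi P := psi_eq_psiC P ▸ le_psiC _
  have hrearrange := mul_add_mul_le_mul_add_mul hZ hcard
  lia

theorem eleven_mul_psi_le_of_isComplement'_of_isCyclic [P.Normal] [IsCyclic H] [IsCyclic P]
    [Fintype G] [Fintype H] [Fintype P] (hG : ¬ IsCyclic G) (hP : IsPGroup p P) (hp : 3 ≤ p)
    (hpP : p ∣ Nat.card P) (hHP : H.IsComplement' P)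
    (hcop : (Nat.card H).Coprime (Nat.card P)) : 11 * psi G ≤ 7 * (psi H * psi P) := by
  classical
  have hZ : (Subgroup.centralizer (P : Set G)).subgroupOf H ≠ ⊤ := fun h =>
    hG (isCyclic_of_isComplement' hHP hcop (Subgroup.subgroupOf_eq_top.1 h))
  have hpsi := psi_add_psi_centralizer_mul_card hP hHP hcop
  have hpsiZ := three_mul_psi_subgroup_le hZ
  have hpsiP : 7 * Nat.card P ≤ 3 * psi P :=
    psi_eq_psiC P ▸ seven_mul_le_three_mul_psiC Fact.out hp hpP
  have hrearrange := mul_add_mul_le_mul_add_mul hpsiZ (show Nat.card P ≤ psi P by lia)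
  have hbound : 3 * psi G ≤ psi H * psi P + 2 * (psi H * Nat.card P) := by linarith
  have hcard : 7 * (psi H * Nat.card P) ≤ 3 * (psi H * psi P) := by
    rw [mul_left_comm, mul_left_comm 3]
    exact Nat.mul_le_mul_left _ hpsiP
  linarith [hbound, hcard]

theorem eleven_mul_psi_le_of_isComplement' [P.Normal] [IsCyclic P] [Fintype G] [Fintype H]
    (hG : ¬ IsCyclic G) (hP : IsPGroup p P) (hp : 3 ≤ p) (hpP : p ∣ Nat.card P)
    (hHP : H.IsComplement' P) (hcop : (Nat.card H).Coprime (Nat.card P))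
    (hH : ¬ IsCyclic H → 11 * psi H ≤ 7 * psiC (Nat.card H)) :
    11 * psi G ≤ 7 * psiC (Nat.card G) := by
  cases nonempty_fintype P
  rw [← hHP.card_mul_card, psiC_mul hcop, ← psi_eq_psiC P]
  by_cases hcyc : IsCyclic H
  · rw [← psi_eq_psiC H]
    exact eleven_mul_psi_le_of_isComplement'_of_isCyclic hG hP hp hpP hHP hcop
  · calc 11 * psi G ≤ 11 * (psi H * psi P) :=
        Nat.mul_le_mul_left _ (psi_le_psi_mul_psi_of_isComplement' hP hHP hcop)
      _ = 11 * psi H * psi P := (mul_assoc _ _ _).symm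
      _ ≤ 7 * psiC (Nat.card H) * psi P := Nat.mul_le_mul_right _ (hH hcyc)
      _ = 7 * (psiC (Nat.card H) * psi P) := mul_assoc _ _ _

end Complement

theorem eleven_mul_psi_le_of_index_lt {G : Type*} [Group G] [Fintype G] (hG : ¬ IsCyclic G)
    {p : ℕ} [Fact p.Prime] (hp : 3 ≤ p) (hpG : p ∣ Nat.card G) {C : Subgroup G} [IsCyclic C]
    (hC : C.index < p) (ih : ∀ (H : Subgroup G) [Fintype H], Nat.card H < Nat.card G →
      ¬ IsCyclic H → 11 * psi H ≤ 7 * psiC (Nat.card H)) :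
    11 * psi G ≤ 7 * psiC (Nat.card G) := by
  classical
  let P : Sylow p G := default
  have hnormal : (P : Subgroup G).Normal := sylow_normal_of_index_lt hC P
  have hcyc : IsCyclic P :=
    Subgroup.isCyclic_of_le (le_of_isPGroup_of_index_lt P.isPGroup' hC)
  have hpP : p ∣ Nat.card P := P.dvd_card_of_dvd_card hpG
  obtain ⟨H, hHP⟩ := Subgroup.exists_left_complement'_of_coprime P.card_coprime_index
  have hcop : (Nat.card H).Coprime (Nat.card P) := by
    rw [← hHP.index_eq_card]
    exact P.card_coprime_index.symm
  have hlt : Nat.card H < Nat.card G := by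
    rw [← hHP.card_mul_card]
    exact lt_mul_of_one_lt_right Nat.card_pos
      ((Fact.out : p.Prime).one_lt.trans_le (Nat.le_of_dvd Nat.card_pos hpP))
  exact eleven_mul_psi_le_of_isComplement' hG P.isPGroup' hp hpP hHP hcop (ih H hlt)

theorem sum_orders_noncyclic_le {G : Type*} [Group G] [Fintype G] (n : ℕ)
    (hn : Fintype.card G = n) (hG : ¬ IsCyclic G) :
    11 * psi G ≤ 7 * psiC n := by
  induction n using Nat.strong_induction_on generalizing G with
  | _ n ih =>
  obtain rfl : Nat.card G = n := Nat.card_eq_fintype_card.trans hn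
  by_contra! hlt
  have : Nontrivial G := not_subsingleton_iff_nontrivial.1 fun _ => hG inferInstance
  obtain ⟨p, hp, hpG, hsmooth⟩ := exists_prime_dvd_and_mem_smoothNumbers
    (Finite.one_lt_card (α := G))
  have := Fact.mk hp
  obtain ⟨x, hx⟩ := Finite.exists_max (orderOf : G → ℕ)
  have hp2 : 2 ≤ p := hp.two_le
  have hindex := fourteen_mul_index_zpowers_lt (by lia) hsmooth hx hlt
  have hindex1 : (Subgroup.zpowers x).index ≠ 1 := fun h =>
    hG (isCyclic_iff_exists_zpowers_eq_top.2 ⟨x, Subgroup.index_eq_one.1 h⟩)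
  have hindex0 : (Subgroup.zpowers x).index ≠ 0 := Subgroup.FiniteIndex.index_ne_zero
  refine hlt.not_ge ?_
  rcases lt_or_ge (Subgroup.zpowers x).index p with hlt' | hge
  · exact eleven_mul_psi_le_of_index_lt hG (by lia) hpG hlt' fun H _ hH =>
      ih _ hH Nat.card_eq_fintype_card.symm
  · obtain rfl | rfl : p = 2 ∨ p = 3 := by lia
    · exact eleven_mul_psi_le_of_index_eq_two hG hsmooth hx (by lia)
    · exact eleven_mul_psi_le_of_index_eq_three hsmooth hx (by lia)
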